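/- Let Ω ⊆ [0,∞) be an interval, let f be a doubly concave function on Ω, let A, B be n×n Hermitian complex matrices with all eigenvalues in Ω, and let p ∈ (0,1] (note that the spectrum of A β_p B automatically lies in Ω). Then det^{1/n} f(A β_p B) ≥ (det^{1/n} f(A)) β_p (det^{1/n} f(B)), where for scalars a,b ≥ 0, a β_p b := ((a^p + b^p)/2)^{1/p}. -/

import Mathlib

open scoped ComplexOrder

section Defs

variable {n : ℕ}

/-- eigenvalues of a Hermitian matrix listed in increasing order -/
noncomputable def eigUp {A : Matrix (Fin n) (Fin n) ℂ} (hA : A.IsHermitian) : Fin n → ℝ :=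
  fun i => hA.eigenvalues (Tuple.sort hA.eigenvalues i)

/-- eigenvalues of a Hermitian matrix listed in decreasing order: `eigDown hA i = μ_{i+1}(A)` -/
noncomputable def eigDown {A : Matrix (Fin n) (Fin n) ℂ} (hA : A.IsHermitian) : Fin n → ℝ :=
  fun i => eigUp hA i.rev

/-- the product of the `k` smallest eigenvalues, `∏_{j=1}^k μ_{n+1-j}(A)` -/
noncomputable def prodSmall (A : Matrix (Fin n) (Fin n) ℂ) (k : ℕ) : ℝ :=
  if hA : A.IsHermitian then
    ∏ i ∈ Finset.univ.filter (fun i : Fin n => (i : ℕ) < k), eigUp hA i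
  else 0

/-- the product of the `k` largest eigenvalues, `∏_{j=1}^k μ_j(A)` -/
noncomputable def prodLarge (A : Matrix (Fin n) (Fin n) ℂ) (k : ℕ) : ℝ :=
  if hA : A.IsHermitian then
    ∏ i ∈ Finset.univ.filter (fun i : Fin n => (i : ℕ) < k), eigDown hA i
  else 0

/-- the sum of the `k` smallest eigenvalues, `∑_{j=1}^k μ_{n+1-j}(A)` -/
noncomputable def sumSmall (A : Matrix (Fin n) (Fin n) ℂ) (k : ℕ) : ℝ :=
  if hA : A.IsHermitian then
    ∑ i ∈ Finset.univ.filter (fun i : Fin n => (i : ℕ) < k), eigUp hA i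
  else 0

/-- A doubly concave function on an interval `Ω ⊆ [0,∞)`. -/
structure DoublyConcaveOn (f : ℝ → ℝ) (Ω : Set ℝ) : Prop where
  subset_Ici : Ω ⊆ Set.Ici (0 : ℝ)
  nonneg : ∀ x ∈ Ω, 0 ≤ f x
  continuousOn : ContinuousOn f Ω
  concaveOn : ConcaveOn ℝ Ω f
  geomConcave : ∀ x ∈ Ω, ∀ y ∈ Ω, Real.sqrt (f x * f y) ≤ f (Real.sqrt (x * y))

/-- `𝔼_p(Z) := (𝔼(Z^p))^{1/p}` -/
noncomputable def Ep {n m : ℕ} (E : Matrix (Fin n) (Fin n) ℂ →ₗ[ℂ] Matrix (Fin m) (Fin m) ℂ)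
    (p : ℝ) (Z : Matrix (Fin n) (Fin n) ℂ) : Matrix (Fin m) (Fin m) ℂ :=
  cfc (fun x : ℝ => x ^ (1 / p)) (E (cfc (fun x : ℝ => x ^ p) Z))

/-- the power `p`-mean `A β_p B := ((A^p + B^p)/2)^{1/p}` -/
noncomputable def betaP (p : ℝ) (A B : Matrix (Fin n) (Fin n) ℂ) : Matrix (Fin n) (Fin n) ℂ :=
  cfc (fun x : ℝ => x ^ (1 / p))
    ((2 : ℂ)⁻¹ • (cfc (fun x : ℝ => x ^ p) A + cfc (fun x : ℝ => x ^ p) B))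

noncomputable def sqrtM (A : Matrix (Fin n) (Fin n) ℂ) : Matrix (Fin n) (Fin n) ℂ :=
  cfc Real.sqrt A

noncomputable def invSqrtM (A : Matrix (Fin n) (Fin n) ℂ) : Matrix (Fin n) (Fin n) ℂ :=
  cfc (fun x : ℝ => (Real.sqrt x)⁻¹) A

/-- operator mean with representing function `h`: `A σ B = A^{1/2} h(A^{-1/2} B A^{-1/2}) A^{1/2}` -/
noncomputable def opMean (h : ℝ → ℝ) (A B : Matrix (Fin n) (Fin n) ℂ) :
    Matrix (Fin n) (Fin n) ℂ :=
  sqrtM A * cfc h (invSqrtM A * B * invSqrtM A) * sqrtM A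

/-- the weighted geometric mean `A #_α B` -/
noncomputable def sharp (α : ℝ) (A B : Matrix (Fin n) (Fin n) ℂ) : Matrix (Fin n) (Fin n) ℂ :=
  sqrtM A * cfc (fun x : ℝ => x ^ α) (invSqrtM A * B * invSqrtM A) * sqrtM A

/-- the (real) determinant of a Hermitian matrix -/
noncomputable def rdet (A : Matrix (Fin n) (Fin n) ℂ) : ℝ := (A.det).re

open Classical in
/-- the derived anti-norm `‖A‖_! = ‖A^{-p}‖^{-1/p}` for invertible positive `A`, `0` otherwise. -/
noncomputable def derivedAntiNorm (N : Matrix (Fin n) (Fin n) ℂ → ℝ) (p : ℝ)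
    (A : Matrix (Fin n) (Fin n) ℂ) : ℝ :=
  if IsUnit A.det then (N (cfc (fun x : ℝ => x ^ (-p)) A)) ^ (-(1 / p)) else 0

end Defs

/-- A continuous midpoint concave function on `[a, b]` that is nonnegative at the end points is
nonnegative. -/
lemma nonneg_of_midpoint_concave {d : ℝ → ℝ} {a b : ℝ} (hd : ContinuousOn d (Set.Icc a b))
    (hmid : ∀ x ∈ Set.Icc a b, ∀ y ∈ Set.Icc a b, (d x + d y) / 2 ≤ d ((x + y) / 2))
    (ha : 0 ≤ d a) (hb : 0 ≤ d b) {x : ℝ} (hx : x ∈ Set.Icc a b) : 0 ≤ d x := by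
  obtain ⟨x₀, hx₀, hmin⟩ := isCompact_Icc.exists_isMinOn ⟨x, hx⟩ hd
  refine le_trans ?_ (hmin hx)
  by_contra! hneg
  obtain ⟨c, ⟨hc, hdc⟩, hleast⟩ :=
    (isCompact_Icc.of_isClosed_subset
      (hd.preimage_isClosed_of_isClosed isClosed_Icc (isClosed_singleton (x := d x₀)))
      Set.inter_subset_left).exists_isLeast ⟨x₀, hx₀, rfl⟩
  have hdc' : d c = d x₀ := hdc
  have hac : a < c := lt_of_le_of_ne hc.1 (by rintro rfl; linarith)
  have hcb : c < b := lt_of_le_of_ne hc.2 (by rintro rfl; linarith)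
  set δ := min (c - a) (b - c)
  have hδ0 : 0 < δ := lt_min (by linarith) (by linarith)
  have hδ1 : δ ≤ c - a := min_le_left _ _
  have hδ2 : δ ≤ b - c := min_le_right _ _
  have hl : c - δ ∈ Set.Icc a b := ⟨by linarith, by linarith⟩
  have hr : c + δ ∈ Set.Icc a b := ⟨by linarith, by linarith⟩
  have h1 : d x₀ < d (c - δ) := lt_of_le_of_ne (hmin hl) fun h => by
    have : c ≤ c - δ := hleast ⟨hl, h.symm⟩
    linarith
  have h2 : d x₀ ≤ d (c + δ) := hmin hr
  have h3 := hmid _ hl _ hr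
  rw [show (c - δ + (c + δ)) / 2 = c by ring] at h3
  linarith

/-- A continuous midpoint concave function on `[a, b]` has decreasing slopes. -/
lemma slope_anti_adjacent_of_midpoint_concave {φ : ℝ → ℝ} {a b c : ℝ}
    (hφ : ContinuousOn φ (Set.Icc a b))
    (hmid : ∀ x ∈ Set.Icc a b, ∀ y ∈ Set.Icc a b, (φ x + φ y) / 2 ≤ φ ((x + y) / 2))
    (hac : a < c) (hcb : c < b) : (φ b - φ c) / (b - c) ≤ (φ c - φ a) / (c - a) := by
  have hab : 0 < b - a := by linarith
  have key := nonneg_of_midpoint_concave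
    (d := fun t => φ t - (φ a + (φ b - φ a) / (b - a) * (t - a))) (a := a) (b := b)
    (by fun_prop) (fun x hx y hy => by
      have := hmid x hx y hy
      have h2 : (φ b - φ a) / (b - a) * ((x + y) / 2 - a)
        = ((φ b - φ a) / (b - a) * (x - a) + (φ b - φ a) / (b - a) * (y - a)) / 2 := by ring
      linarith) (by simp) (by simp [div_mul_cancel₀ _ hab.ne'])
    (x := c) ⟨hac.le, hcb.le⟩
  have h3 : (φ b - φ a) / (b - a) * (c - a) ≤ φ c - φ a := by linarith
  rw [div_mul_eq_mul_div, div_le_iff₀ hab] at h3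
  rw [div_le_div_iff₀ (by linarith) (by linarith)]
  nlinarith

/-- Bernoulli type inequality outside `(0, 1)`. -/
lemma rpow_one_add_mul_le {p K u : ℝ} (hp0 : 0 ≤ p) (hp1 : p ≤ 1) (hK : K ≤ 0 ∨ 1 ≤ K)
    (hu : 0 ≤ u) (hz : 0 ≤ 1 + K * (u - 1)) :
    (1 + K * (u - 1)) ^ p ≤ 1 + K * (u ^ p - 1) := by
  have hconc := (Real.concaveOn_rpow hp0 hp1).2
  rcases hK with hK | hK
  · have h1 : 0 < 1 - K := by linarith
    have := hconc (Set.mem_Ici.2 hz) (Set.mem_Ici.2 hu) (a := 1 / (1 - K)) (b := -K / (1 - K))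
      (by positivity) (div_nonneg (by linarith) h1.le) (by field_simp; ring)
    simp only [smul_eq_mul] at this
    rw [show 1 / (1 - K) * (1 + K * (u - 1)) + -K / (1 - K) * u = 1 by field_simp; ring,
      Real.one_rpow, div_mul_eq_mul_div, div_mul_eq_mul_div, ← add_div, div_le_one h1] at this
    linarith
  · have h1 : 0 < K := by linarith
    have := hconc (Set.mem_Ici.2 hz) (Set.mem_Ici.2 zero_le_one) (a := 1 / K) (b := (K - 1) / K)
      (by positivity) (div_nonneg (by linarith) h1.le) (by field_simp; ring)
    simp only [smul_eq_mul] at this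
    rw [show 1 / K * (1 + K * (u - 1)) + (K - 1) / K * 1 = u by field_simp; ring,
      Real.one_rpow, div_mul_eq_mul_div, div_mul_eq_mul_div, ← add_div, div_le_iff₀ h1] at this
    linarith

/-- Bernoulli type inequality in `[0, 1]`. -/
lemma rpow_rpow_le {p K u : ℝ} (hK0 : 0 ≤ K) (hK1 : K ≤ 1) (hu : 0 ≤ u) :
    (u ^ K) ^ p ≤ 1 + K * (u ^ p - 1) := by
  have h := rpow_one_add_le_one_add_mul_self (s := u ^ p - 1)
    (by linarith [Real.rpow_nonneg hu p]) hK0 hK1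
  rwa [add_sub_cancel, ← Real.rpow_mul hu, mul_comm p, Real.rpow_mul hu] at h

lemma DoublyConcaveOn.Icc_subset {f : ℝ → ℝ} {Ω : Set ℝ} (hf : DoublyConcaveOn f Ω) {a b : ℝ}
    (ha : a ∈ Ω) (hb : b ∈ Ω) : Set.Icc a b ⊆ Ω :=
  hf.concaveOn.1.ordConnected.out ha hb

/-- Concavity in logarithmic coordinates. -/
lemma DoublyConcaveOn.log_slope_anti {f : ℝ → ℝ} {Ω : Set ℝ} (hf : DoublyConcaveOn f Ω)
    {a b c : ℝ} (ha : a ∈ Ω) (hb : b ∈ Ω) (ha0 : 0 < a) (hac : a < c) (hcb : c < b)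
    (hfa : 0 < f a) (hfb : 0 < f b) :
    (Real.log (f b) - Real.log (f c)) / (Real.log b - Real.log c)
      ≤ (Real.log (f c) - Real.log (f a)) / (Real.log c - Real.log a) := by
  have hc0 := ha0.trans hac
  have hb0 := hc0.trans hcb
  have hmaps : Set.MapsTo Real.exp (Set.Icc (Real.log a) (Real.log b)) (Set.Icc a b) :=
    fun t ht => ⟨(Real.log_le_iff_le_exp ha0).1 ht.1, (Real.le_log_iff_exp_le hb0).1 ht.2⟩
  have hpos : ∀ x ∈ Set.Icc a b, 0 < f x := fun x hx =>
    (lt_min hfa hfb).trans_le (hf.concaveOn.min_le_of_mem_Icc ha hb hx)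
  have hsub := hf.Icc_subset ha hb
  have := slope_anti_adjacent_of_midpoint_concave (φ := fun t => Real.log (f (Real.exp t)))
    (a := Real.log a) (b := Real.log b) (c := Real.log c)
    (((hf.continuousOn.mono hsub).comp Real.continuous_exp.continuousOn hmaps).log
      fun t ht => (hpos _ (hmaps ht)).ne')
    (fun s hs t ht => by
      have h := hf.geomConcave _ (hsub (hmaps hs)) _ (hsub (hmaps ht))
      have hs' := hpos _ (hmaps hs)
      have ht' := hpos _ (hmaps ht)
      rw [← Real.log_mul hs'.ne' ht'.ne', ← Real.log_sqrt (by positivity)]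
      rw [← Real.exp_add, ← Real.exp_half] at h
      exact Real.log_le_log (by positivity) h)
    (Real.log_lt_log ha0 hac) (Real.log_lt_log hc0 hcb)
  simpa only [Real.exp_log ha0, Real.exp_log hb0, Real.exp_log hc0] using this

/-- At an interior point, `f ^ p` lies below an affine function of `x ^ p`. -/
lemma DoublyConcaveOn.exists_support {f : ℝ → ℝ} {Ω : Set ℝ} (hf : DoublyConcaveOn f Ω)
    {p : ℝ} (hp0 : 0 < p) (hp1 : p ≤ 1) {a b c : ℝ} (ha : a ∈ Ω) (hb : b ∈ Ω)
    (hac : a < c) (hcb : c < b) (hfc : 0 < f c) :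
    ∃ K : ℝ, f a ^ p ≤ f c ^ p * (1 + K * ((a / c) ^ p - 1)) ∧
      f b ^ p ≤ f c ^ p * (1 + K * ((b / c) ^ p - 1)) := by
  have ha0 : 0 ≤ a := hf.subset_Ici ha
  have hc0 : 0 < c := ha0.trans_lt hac
  have hb0 : 0 < b := hc0.trans hcb
  have hfa := hf.nonneg a ha
  have hfb := hf.nonneg b hb
  have hslope := hf.concaveOn.slope_anti_adjacent ha hb hac hcb
  have of_le : ∀ {x z r : ℝ}, 0 ≤ f x → 0 ≤ z → f x ≤ f c * z → z ^ p ≤ r →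
      f x ^ p ≤ f c ^ p * r := fun {x z r} hx hz h hr =>
    calc f x ^ p ≤ (f c * z) ^ p := Real.rpow_le_rpow hx h hp0.le
      _ = f c ^ p * z ^ p := Real.mul_rpow hfc.le hz
      _ ≤ f c ^ p * r := by gcongr
  by_cases hlin : f b ≤ f c ∨ f c * b ≤ f b * c
  · set K := (f b - f c) / (b - c) * (c / f c) with hKdef
    have hbc : 0 < b - c := by linarith
    have hca : 0 < c - a := by linarith
    have hK : K ≤ 0 ∨ 1 ≤ K := by
      refine hlin.imp (fun h => ?_) fun h => ?_
      · exact mul_nonpos_of_nonpos_of_nonneg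
          (div_nonpos_of_nonpos_of_nonneg (by linarith) hbc.le) (by positivity)
      · rw [hKdef, div_mul_div_comm, one_le_div (by positivity)]
        linarith
    have hexp : ∀ x, f c * (1 + K * (x / c - 1)) = f c + (f b - f c) / (b - c) * (x - c) := by
      intro x
      rw [hKdef]
      field_simp
    have hxa : f a ≤ f c * (1 + K * (a / c - 1)) := by
      rw [hexp]
      rw [le_div_iff₀ hca] at hslope
      linarith
    have hxb : f b ≤ f c * (1 + K * (b / c - 1)) := by
      rw [hexp, div_mul_cancel₀ _ hbc.ne']
      linarith
    have hza := nonneg_of_mul_nonneg_right (hfa.trans hxa) hfc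
    have hzb := nonneg_of_mul_nonneg_right (hfb.trans hxb) hfc
    exact ⟨K, of_le hfa hza hxa (rpow_one_add_mul_le hp0.le hp1 hK (by positivity) hza),
      of_le hfb hzb hxb (rpow_one_add_mul_le hp0.le hp1 hK (by positivity) hzb)⟩
  · push Not at hlin
    obtain ⟨hlt, hlt'⟩ := hlin
    have hfb0 : 0 < f b := hfc.trans hlt
    have hlogbc : 0 < Real.log b - Real.log c := sub_pos.2 (Real.log_lt_log hc0 hcb)
    set K := (Real.log (f b) - Real.log (f c)) / (Real.log b - Real.log c) with hKdef
    have hK0 : 0 ≤ K := div_nonneg (sub_nonneg.2 (Real.log_le_log hfc hlt.le)) hlogbc.le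
    have hK1 : K ≤ 1 := by
      rw [hKdef, div_le_one hlogbc]
      have h := Real.log_le_log (by positivity) hlt'.le
      rw [Real.log_mul hfb0.ne' hc0.ne', Real.log_mul hfc.ne' hb0.ne'] at h
      linarith
    have of_log : ∀ {x : ℝ}, 0 < x → 0 < f x →
        Real.log (f x) ≤ Real.log (f c) + K * (Real.log x - Real.log c) →
        f x ≤ f c * (x / c) ^ K := fun {x} hx hfx h => by
      rw [← Real.log_le_log_iff hfx (by positivity), Real.log_mul hfc.ne' (by positivity),
        Real.log_rpow (by positivity), Real.log_div hx.ne' hc0.ne']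
      exact h
    refine ⟨K, ?_, of_le hfb (by positivity) (of_log hb0 hfb0 ?_)
      (rpow_rpow_le hK0 hK1 (by positivity))⟩
    · rcases hfa.eq_or_lt with h0 | hfa0
      · rw [← h0, Real.zero_rpow hp0.ne']
        have : 0 ≤ (a / c) ^ p := by positivity
        have : 0 ≤ 1 + K * ((a / c) ^ p - 1) := by nlinarith
        positivity
      · have ha0' : 0 < a := by
          refine lt_of_le_of_ne ha0 fun h => ?_
          subst h
          have h := hf.geomConcave 0 ha b hb
          rw [zero_mul, Real.sqrt_zero, Real.sqrt_le_left hfa0.le, sq] at h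
          have h' := le_of_mul_le_mul_left h hfa0
          have := hf.concaveOn.min_le_of_mem_Icc ha hb ⟨hac.le, hcb.le⟩
          rw [min_eq_right h'] at this
          linarith
        refine of_le hfa (by positivity) (of_log ha0' hfa0 ?_)
          (rpow_rpow_le hK0 hK1 (by positivity))
        have h := hf.log_slope_anti ha hb ha0' hac hcb hfa0 hfb0
        rw [← hKdef, le_div_iff₀ (sub_pos.2 (Real.log_lt_log ha0' hac))] at h
        linarith
    · rw [hKdef, div_mul_cancel₀ _ hlogbc.ne']
      linarith

/-- If `f` is doubly concave and `0 < p ≤ 1`, then `x ↦ f (x ^ (1 / p)) ^ p` is concave. -/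
lemma DoublyConcaveOn.concaveOn_rpow_conj {f : ℝ → ℝ} {Ω : Set ℝ} (hf : DoublyConcaveOn f Ω)
    {p : ℝ} (hp0 : 0 < p) (hp1 : p ≤ 1) :
    ConcaveOn ℝ {x : ℝ | 0 ≤ x ∧ x ^ (1 / p) ∈ Ω} (fun x => f (x ^ (1 / p)) ^ p) := by
  have hq : 0 < 1 / p := by positivity
  have hinv : ∀ {x : ℝ}, 0 ≤ x → (x ^ (1 / p)) ^ p = x := fun hx => by
    rw [← Real.rpow_mul hx, one_div_mul_cancel hp0.ne', Real.rpow_one]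
  have hconv : Convex ℝ {x : ℝ | 0 ≤ x ∧ x ^ (1 / p) ∈ Ω} := by
    refine Set.OrdConnected.convex ⟨fun x hx y hy z hz => ?_⟩
    have hz0 : 0 ≤ z := hx.1.trans hz.1
    exact ⟨hz0, hf.Icc_subset hx.2 hy.2 ⟨Real.rpow_le_rpow hx.1 hz.1 hq.le,
      Real.rpow_le_rpow hz0 hz.2 hq.le⟩⟩
  refine LinearOrder.concaveOn_of_lt hconv fun x hx y hy hxy l m hl hm hlm => ?_
  set z := l • x + m • y with hz
  simp only [smul_eq_mul] at hz ⊢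
  have hm' : l = 1 - m := by linarith
  have hxz : x < z := by rw [hz, hm']; nlinarith
  have hzy : z < y := by rw [hz, hm']; nlinarith
  have hx0 := hx.1
  have hz0 : 0 < z := hx0.trans_lt hxz
  have hac := Real.rpow_lt_rpow hx0 hxz hq
  have hcb := Real.rpow_lt_rpow hz0.le hzy hq
  have hc := hf.Icc_subset hx.2 hy.2 ⟨hac.le, hcb.le⟩
  have hfa := hf.nonneg _ hx.2
  have hfb := hf.nonneg _ hy.2
  rcases (hf.nonneg _ hc).eq_or_lt with h0 | hpos
  · have hslope := hf.concaveOn.slope_anti_adjacent hx.2 hy.2 hac hcb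
    rw [← h0, sub_zero, zero_sub] at hslope
    have h1 := div_nonneg hfb (sub_pos.2 hcb).le
    have h2 : -f (x ^ (1 / p)) / (z ^ (1 / p) - x ^ (1 / p)) ≤ 0 :=
      div_nonpos_of_nonpos_of_nonneg (by linarith) (sub_pos.2 hac).le
    have h3 : f (y ^ (1 / p)) = 0 := by
      have := le_antisymm (hslope.trans h2) h1
      exact (div_eq_zero_iff.1 this).resolve_right (sub_pos.2 hcb).ne'
    have h4 : f (x ^ (1 / p)) = 0 := by
      have := le_antisymm h2 (h1.trans hslope)
      exact neg_eq_zero.1 ((div_eq_zero_iff.1 this).resolve_right (sub_pos.2 hac).ne')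
    rw [h3, h4, ← h0]
    simp [Real.zero_rpow hp0.ne']
  · obtain ⟨K, hKa, hKb⟩ := hf.exists_support hp0 hp1 hx.2 hy.2 hac hcb hpos
    rw [Real.div_rpow (by positivity) (by positivity), hinv hx0, hinv hz0.le] at hKa
    rw [Real.div_rpow (Real.rpow_nonneg hy.1 _) (by positivity), hinv hy.1, hinv hz0.le] at hKb
    calc l * f (x ^ (1 / p)) ^ p + m * f (y ^ (1 / p)) ^ p
        ≤ l * (f (z ^ (1 / p)) ^ p * (1 + K * (x / z - 1)))
          + m * (f (z ^ (1 / p)) ^ p * (1 + K * (y / z - 1))) := by gcongr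
      _ = f (z ^ (1 / p)) ^ p * ((l + m) + K * ((l * x + m * y) / z - (l + m))) := by ring
      _ = f (z ^ (1 / p)) ^ p := by rw [hlm, ← hz, div_self hz0.ne']; ring

/-- Superadditivity of the geometric mean. -/
lemma geom_mean_add_le {n : ℕ} (hn : 0 < n) (α β : Fin n → ℝ) (hα : ∀ i, 0 ≤ α i)
    (hβ : ∀ i, 0 ≤ β i) :
    (∏ i, α i) ^ ((n : ℝ)⁻¹) + (∏ i, β i) ^ ((n : ℝ)⁻¹) ≤ (∏ i, (α i + β i)) ^ ((n : ℝ)⁻¹) := by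
  have hn' : (0 : ℝ) < n := by exact_mod_cast hn
  by_cases h : ∃ i, α i + β i = 0
  · obtain ⟨i, hi⟩ := h
    have h1 : α i = 0 := by linarith [hα i, hβ i]
    have h2 : β i = 0 := by linarith [hα i, hβ i]
    rw [Finset.prod_eq_zero (Finset.mem_univ i) h1, Finset.prod_eq_zero (Finset.mem_univ i) h2,
      Finset.prod_eq_zero (Finset.mem_univ i) hi]
    simp [Real.zero_rpow (inv_pos.2 hn').ne']
  · push Not at h
    have hpos : ∀ i, 0 < α i + β i := fun i => (add_nonneg (hα i) (hβ i)).lt_of_ne' (h i)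
    have hP : 0 < ∏ i, (α i + β i) := Finset.prod_pos fun i _ => hpos i
    have key : ∀ γ : Fin n → ℝ, (∀ i, 0 ≤ γ i) → (∏ i, γ i) ^ ((n : ℝ)⁻¹) ≤
        (∏ i, (α i + β i)) ^ ((n : ℝ)⁻¹) * ∑ i, (n : ℝ)⁻¹ * (γ i / (α i + β i)) := by
      intro γ hγ
      have := Real.geom_mean_le_arith_mean_weighted Finset.univ (fun _ => (n : ℝ)⁻¹)
        (fun i => γ i / (α i + β i)) (fun _ _ => by positivity) (by simp [hn'.ne'])
        (fun i _ => div_nonneg (hγ i) (hpos i).le)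
      rw [Real.finsetProd_rpow _ _ (fun i _ => div_nonneg (hγ i) (hpos i).le),
        Finset.prod_div_distrib, Real.div_rpow (Finset.prod_nonneg fun i _ => hγ i) hP.le,
        div_le_iff₀ (by positivity)] at this
      linarith
    refine (add_le_add (key α hα) (key β hβ)).trans_eq ?_
    rw [← mul_add, ← Finset.sum_add_distrib]
    simp_rw [← mul_add, ← add_div]
    rw [Finset.sum_congr rfl fun i _ => by rw [div_self (h i)]]
    simp [hn'.ne']

/-- A doubly stochastic matrix increases the product of a nonnegative vector. -/
lemma prod_le_prod_mulVec {n : ℕ} {S : Matrix (Fin n) (Fin n) ℝ}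
    (hS : S ∈ doublyStochastic ℝ (Fin n)) (x : Fin n → ℝ) (hx : ∀ i, 0 ≤ x i) :
    ∏ j, x j ≤ ∏ i, ∑ j, S i j * x j :=
  calc ∏ j, x j = ∏ j, ∏ i, x j ^ S i j := by
        refine Finset.prod_congr rfl fun j _ => ?_
        rw [← Real.rpow_sum_of_nonneg (hx j) fun i _ => nonneg_of_mem_doublyStochastic hS,
          sum_col_of_mem_doublyStochastic hS, Real.rpow_one]
    _ = ∏ i, ∏ j, x j ^ S i j := Finset.prod_comm
    _ ≤ ∏ i, ∑ j, S i j * x j := by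
        refine Finset.prod_le_prod
          (fun i _ => Finset.prod_nonneg fun j _ => Real.rpow_nonneg (hx j) _) fun i _ => ?_
        exact Real.geom_mean_le_arith_mean_weighted _ _ _
          (fun j _ => nonneg_of_mem_doublyStochastic hS) (sum_row_of_mem_doublyStochastic hS i)
          fun j _ => hx j

lemma normSq_mem_doublyStochastic {n : ℕ} (W : Matrix.unitaryGroup (Fin n) ℂ) :
    (Matrix.of fun i j => Complex.normSq (W.1 i j)) ∈ doublyStochastic ℝ (Fin n) := by
  rw [mem_doublyStochastic_iff_sum]
  refine ⟨fun i j => Complex.normSq_nonneg _, fun i => ?_, fun j => ?_⟩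
  · have h := congrFun (congrFun (Matrix.mem_unitaryGroup_iff.1 W.2) i) i
    rw [Matrix.mul_apply, Matrix.one_apply_eq] at h
    have := congrArg Complex.re h
    simpa [Complex.mul_conj, Matrix.star_apply] using this
  · have h := congrFun (congrFun (Matrix.mem_unitaryGroup_iff'.1 W.2) j) j
    rw [Matrix.mul_apply, Matrix.one_apply_eq] at h
    have := congrArg Complex.re h
    simpa [← Complex.normSq_eq_conj_mul_self, Matrix.star_apply] using this

/-- The diagonal of `g(A)` in an orthonormal basis is a doubly stochastic image of the values of
`g` at the eigenvalues, with weights independent of `g`. -/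
lemma exists_doublyStochastic_diag {n : ℕ} {A : Matrix (Fin n) (Fin n) ℂ} (hA : A.IsHermitian)
    (V : Matrix.unitaryGroup (Fin n) ℂ) :
    ∃ S ∈ doublyStochastic ℝ (Fin n), ∀ (g : ℝ → ℝ) (i : Fin n),
      (star (V : Matrix (Fin n) (Fin n) ℂ) * cfc g A * V) i i
        = ((∑ j, S i j * g (hA.eigenvalues j) : ℝ) : ℂ) := by
  refine ⟨_, normSq_mem_doublyStochastic (star V * hA.eigenvectorUnitary), fun g i => ?_⟩
  have h : star (V : Matrix (Fin n) (Fin n) ℂ) * cfc g A * V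
      = (star V * hA.eigenvectorUnitary).1 * Matrix.diagonal (fun j => (g (hA.eigenvalues j) : ℂ))
        * star (star V * hA.eigenvectorUnitary).1 := by
    rw [hA.cfc_eq, Matrix.IsHermitian.cfc, Unitary.conjStarAlgAut_apply]
    simp only [Submonoid.coe_mul, Unitary.coe_star, star_mul, star_star, mul_assoc]
    rfl
  rw [h, Matrix.mul_apply]
  push_cast
  refine Finset.sum_congr rfl fun j _ => ?_
  rw [Matrix.mul_diagonal, Matrix.star_apply, Matrix.of_apply, ← Complex.mul_conj]
  simp only [RCLike.star_def]
  ring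

lemma rdet_cfc {n : ℕ} {A : Matrix (Fin n) (Fin n) ℂ} (hA : A.IsHermitian) (g : ℝ → ℝ) :
    rdet (cfc g A) = ∏ i, g (hA.eigenvalues i) := by
  have h : (cfc g A).det = ((∏ i, g (hA.eigenvalues i) : ℝ) : ℂ) := by
    rw [hA.cfc_eq, Matrix.IsHermitian.cfc, Unitary.conjStarAlgAut_apply, Matrix.det_mul_right_comm,
      Unitary.mul_star_self_of_mem hA.eigenvectorUnitary.2, one_mul, Matrix.det_diagonal]
    push_cast
    rfl
  rw [rdet, h, Complex.ofReal_re]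

theorem stmt_4 {n : ℕ} (hn : 0 < n) (f : ℝ → ℝ) (Ω : Set ℝ) (hf : DoublyConcaveOn f Ω)
    (A B : Matrix (Fin n) (Fin n) ℂ) (hA : A.IsHermitian) (hB : B.IsHermitian)
    (hΩA : spectrum ℝ A ⊆ Ω) (hΩB : spectrum ℝ B ⊆ Ω)
    (p : ℝ) (hp0 : 0 < p) (hp1 : p ≤ 1) :
    ((((rdet (cfc f A)) ^ ((n : ℝ)⁻¹)) ^ p + ((rdet (cfc f B)) ^ ((n : ℝ)⁻¹)) ^ p) / 2) ^ (1 / p)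
      ≤ (rdet (cfc f (betaP p A B))) ^ ((n : ℝ)⁻¹) := by
  have hn' : (0 : ℝ) < n := by exact_mod_cast hn
  set M := (2 : ℂ)⁻¹ • (cfc (fun x : ℝ => x ^ p) A + cfc (fun x : ℝ => x ^ p) B) with hM
  have hMH : M.IsHermitian := by
    have h1 : IsSelfAdjoint (cfc (fun x : ℝ => x ^ p) A) := cfc_predicate _ _
    have h2 : IsSelfAdjoint (cfc (fun x : ℝ => x ^ p) B) := cfc_predicate _ _
    exact IsSelfAdjoint.smul (by simp [IsSelfAdjoint]) (h1.add h2)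
  have hcomp : cfc f (betaP p A B) = cfc (fun x => f (x ^ (1 / p))) M := by
    have hfin := Matrix.finite_real_spectrum (A := M)
    rw [betaP, ← hM]
    exact (cfc_comp' f (fun x : ℝ => x ^ (1 / p)) M ((hfin.image _).continuousOn _)
      (hfin.continuousOn _) hMH.isSelfAdjoint).symm
  obtain ⟨S, hS, hSg⟩ := exists_doublyStochastic_diag hA hMH.eigenvectorUnitary
  obtain ⟨T, hT, hTg⟩ := exists_doublyStochastic_diag hB hMH.eigenvectorUnitary
  set a := hA.eigenvalues
  set b := hB.eigenvalues
  set c := hMH.eigenvalues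
  have haΩ : ∀ j, a j ∈ Ω := fun j => hΩA (hA.eigenvalues_mem_spectrum_real j)
  have hbΩ : ∀ j, b j ∈ Ω := fun j => hΩB (hB.eigenvalues_mem_spectrum_real j)
  have hci : ∀ i, c i = (1 / 2 : ℝ) * (∑ j, S i j * a j ^ p) + (1 / 2) * ∑ j, T i j * b j ^ p := by
    intro i
    have h := congrFun (congrFun hMH.conjStarAlgAut_star_eigenvectorUnitary i) i
    rw [Unitary.conjStarAlgAut_apply, Matrix.diagonal_apply_eq] at h
    simp only [Unitary.coe_star, star_star] at h
    nth_rewrite 2 [hM] at h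
    rw [Matrix.mul_smul, Matrix.smul_mul, mul_add, add_mul, Matrix.smul_apply, Matrix.add_apply,
      hSg, hTg] at h
    apply Complex.ofReal_injective
    refine Eq.trans h.symm ?_
    push_cast
    rw [smul_eq_mul]
    ring
  set Ω' := {x : ℝ | 0 ≤ x ∧ x ^ (1 / p) ∈ Ω}
  set h : ℝ → ℝ := fun x => f (x ^ (1 / p)) ^ p with hh
  have hconc : ConcaveOn ℝ Ω' h := hf.concaveOn_rpow_conj hp0 hp1
  have hinv : ∀ {x : ℝ}, x ∈ Ω → (x ^ p) ^ (1 / p) = x := fun hx => by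
    rw [← Real.rpow_mul (hf.subset_Ici hx), mul_one_div_cancel hp0.ne', Real.rpow_one]
  have hmem : ∀ {x : ℝ}, x ∈ Ω → x ^ p ∈ Ω' := fun hx =>
    ⟨Real.rpow_nonneg (hf.subset_Ici hx) _, by rwa [hinv hx]⟩
  have hval : ∀ {x : ℝ}, x ∈ Ω → h (x ^ p) = f x ^ p := fun hx => by
    simp only [hh, hinv hx]
  have jensen : ∀ (R : Matrix (Fin n) (Fin n) ℝ) (x : Fin n → ℝ), R ∈ doublyStochastic ℝ (Fin n) →
      (∀ j, x j ∈ Ω) → ∀ i, (∑ j, R i j * x j ^ p) ∈ Ω' ∧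
        ∑ j, R i j * f (x j) ^ p ≤ h (∑ j, R i j * x j ^ p) := by
    intro R x hR hx i
    have h0 : ∀ j ∈ Finset.univ, 0 ≤ R i j := fun j _ => nonneg_of_mem_doublyStochastic hR
    have h1 := sum_row_of_mem_doublyStochastic hR i
    refine ⟨by simpa using hconc.1.sum_mem h0 h1 fun j _ => hmem (hx j), ?_⟩
    have := hconc.le_map_sum h0 h1 fun j _ => hmem (hx j)
    simpa only [smul_eq_mul, hval (hx _)] using this
  set α : Fin n → ℝ := fun i => ∑ j, S i j * f (a j) ^ p
  set β : Fin n → ℝ := fun i => ∑ j, T i j * f (b j) ^ p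
  have hfa : ∀ j, 0 ≤ f (a j) := fun j => hf.nonneg _ (haΩ j)
  have hfb : ∀ j, 0 ≤ f (b j) := fun j => hf.nonneg _ (hbΩ j)
  have hα0 : ∀ i, 0 ≤ α i := fun i => Finset.sum_nonneg fun j _ =>
    mul_nonneg (nonneg_of_mem_doublyStochastic hS) (Real.rpow_nonneg (hfa j) _)
  have hβ0 : ∀ i, 0 ≤ β i := fun i => Finset.sum_nonneg fun j _ =>
    mul_nonneg (nonneg_of_mem_doublyStochastic hT) (Real.rpow_nonneg (hfb j) _)
  have hcΩ : ∀ i, c i ∈ Ω' ∧ 1 / 2 * α i + 1 / 2 * β i ≤ h (c i) := by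
    intro i
    obtain ⟨h1, h2⟩ := jensen S a hS haΩ i
    obtain ⟨h3, h4⟩ := jensen T b hT hbΩ i
    rw [hci i]
    refine ⟨hconc.1 h1 h3 (by norm_num) (by norm_num) (by norm_num), ?_⟩
    refine le_trans ?_ (hconc.2 h1 h3 (by norm_num) (by norm_num) (by norm_num))
    simp only [smul_eq_mul]
    linarith
  have swap : ∀ x : Fin n → ℝ, (∀ j, 0 ≤ x j) →
      ((∏ j, x j) ^ ((n : ℝ)⁻¹)) ^ p = (∏ j, x j ^ p) ^ ((n : ℝ)⁻¹) := fun x hx => by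
    have hprod := Finset.prod_nonneg fun j (_ : j ∈ Finset.univ) => hx j
    rw [Real.finsetProd_rpow _ _ fun j _ => hx j, ← Real.rpow_mul hprod, ← Real.rpow_mul hprod,
      mul_comm]
  have hfc : ∀ i, 0 ≤ f (c i ^ (1 / p)) := fun i => hf.nonneg _ (hcΩ i).1.2
  rw [hcomp, rdet_cfc hA, rdet_cfc hB, rdet_cfc hMH, swap _ hfa, swap _ hfb]
  have hprod := Finset.prod_nonneg fun j (_ : j ∈ Finset.univ) => hfc j
  have hfap := Finset.prod_nonneg fun j (_ : j ∈ Finset.univ) => Real.rpow_nonneg (hfa j) p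
  have hfbp := Finset.prod_nonneg fun j (_ : j ∈ Finset.univ) => Real.rpow_nonneg (hfb j) p
  have hroot : ∀ {x y : ℝ}, 0 ≤ x → 0 ≤ y → x ≤ y ^ p → x ^ (1 / p) ≤ y := fun hx hy hxy => by
    rwa [one_div, Real.rpow_inv_le_iff_of_pos hx hy hp0]
  refine hroot (by positivity) (Real.rpow_nonneg hprod _) ?_
  rw [swap _ hfc]
  calc ((∏ j, f (a j) ^ p) ^ (n : ℝ)⁻¹ + (∏ j, f (b j) ^ p) ^ (n : ℝ)⁻¹) / 2
      ≤ ((∏ i, α i) ^ (n : ℝ)⁻¹ + (∏ i, β i) ^ (n : ℝ)⁻¹) / 2 := by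
        have hαp := prod_le_prod_mulVec hS _ fun j => Real.rpow_nonneg (hfa j) p
        have hβp := prod_le_prod_mulVec hT _ fun j => Real.rpow_nonneg (hfb j) p
        have hα' := Real.rpow_le_rpow hfap hαp (inv_nonneg.2 hn'.le)
        have hβ' := Real.rpow_le_rpow hfbp hβp (inv_nonneg.2 hn'.le)
        exact div_le_div_of_nonneg_right (add_le_add hα' hβ') zero_le_two
    _ ≤ (∏ i, (α i + β i)) ^ (n : ℝ)⁻¹ / 2 := by
        gcongr
        exact geom_mean_add_le hn α β hα0 hβ0
    _ = (∏ i, (1 / 2 * α i + 1 / 2 * β i)) ^ (n : ℝ)⁻¹ := by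
        simp_rw [← mul_add]
        rw [Finset.prod_mul_distrib, Real.mul_rpow (by positivity)
          (Finset.prod_nonneg fun i _ => add_nonneg (hα0 i) (hβ0 i)), Finset.prod_const,
          Finset.card_univ, Fintype.card_fin, Real.pow_rpow_inv_natCast (by norm_num) hn.ne']
        ring
    _ ≤ (∏ i, h (c i)) ^ (n : ℝ)⁻¹ := by
        have h0 : ∀ i, 0 ≤ 1 / 2 * α i + 1 / 2 * β i := fun i => by linarith [hα0 i, hβ0 i]
        refine Real.rpow_le_rpow (Finset.prod_nonneg fun i _ => h0 i) ?_ (by positivity)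
        exact Finset.prod_le_prod (fun i _ => h0 i) fun i _ => (hcΩ i).2
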